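/- (Key convergence inequality.) Let ε ∈ (0,1), let (p^ε,q^ε) ∈ G × A be the solution of the AP formulation, let φ^ε := p^ε + q^ε, and let φ⁰ ∈ G be the unique solution of the Limit problem (L). Then (1/(2ε)) a∥(φ^ε − φ⁰, φ^ε − φ⁰) + a⊥(φ^ε − φ⁰, φ^ε − φ⁰) ≤ ε (C_W² F₀²)/2 − a⊥(φ⁰, q^ε). -/

import Mathlib

/-!
Let `e = p + q - φ₀ = (p - φ₀) + q` be the error. Since `p - φ₀` lies in the radical of `apar`, only
`q` contributes to `apar e e`. Galerkin orthogonality `aperp e (p - φ₀) = 0` reduces `aperp e e` to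
`aperp e q`, which the second AP equation evaluates. The outcome is the energy identity
`apar e e / (2 * ε) + aperp e e = ell q - apar q q / (2 * ε) - aperp φ₀ q`, in which half of the
parallel energy of `q` remains to absorb `ell q` by Young's inequality.
-/

/-- A continuous, symmetric, positive semidefinite bilinear form on a real
inner-product space. -/
def IsCSPForm {V : Type*} [NormedAddCommGroup V] [InnerProductSpace ℝ V]
    (a : V →ₗ[ℝ] V →ₗ[ℝ] ℝ) : Prop :=
  (∀ x y : V, a x y = a y x) ∧ (∀ x : V, 0 ≤ a x x) ∧
    (∃ C : ℝ, ∀ x y : V, |a x y| ≤ C * ‖x‖ * ‖y‖)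

namespace AsymptoticPreserving

open LinearMap (BilinForm ker)

theorem apply_add_self_of_mem_ker {R M : Type*} [CommSemiring R] [AddCommMonoid M] [Module R M]
    {B : BilinForm R M} (hB : B.IsSymm) {x : M} (hx : x ∈ ker B) (y : M) :
    B (x + y) (x + y) = B y y := by
  have hxB : B x = 0 := hx
  simp [hxB, hB.eq y x]

section Formulations

variable {R V : Type*} [CommRing R] [AddCommGroup V] [Module R V]

/-- `φ₀` solves the Limit problem (L), posed here on an arbitrary subspace `G`; in the paper `G` is
the kernel of `apar`. -/
structure IsLimitSolution (aperp : BilinForm R V) (ell : V →ₗ[R] R) (G : Submodule R V)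
    (φ₀ : V) : Prop where
  mem : φ₀ ∈ G
  eq : ∀ ψ ∈ G, aperp φ₀ ψ = ell ψ

/-- `(p, q)` solves the Asymptotic-Preserving formulation with parameter `ε`, posed here on an
arbitrary pair of subspaces `G` and `A`; in the paper `G` is the kernel of `apar` and `A` its
orthogonal with respect to `c`. -/
structure IsAPSolution (apar aperp : BilinForm R V) (ell : V →ₗ[R] R) (G A : Submodule R V)
    (ε : R) (p q : V) : Prop where
  mem_left : p ∈ G
  mem_right : q ∈ A
  eq_left : ∀ η ∈ G, aperp p η + aperp q η = ell η
  eq_right : ∀ ξ ∈ A, apar q ξ + ε * aperp q ξ + ε * aperp p ξ = ε * ell ξ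

variable {apar aperp : BilinForm R V} {ell : V →ₗ[R] R} {G A : Submodule R V} {ε : R} {p q φ₀ : V}

theorem IsAPSolution.apar_error_self (hAP : IsAPSolution apar aperp ell G A ε p q)
    (hapar : apar.IsSymm) (hG : G ≤ ker apar) (hφ₀ : φ₀ ∈ G) :
    apar (p + q - φ₀) (p + q - φ₀) = apar q q := by
  rw [add_sub_right_comm]
  exact apply_add_self_of_mem_ker hapar (hG (G.sub_mem hAP.mem_left hφ₀)) q

theorem IsAPSolution.aperp_error_eq_zero (hAP : IsAPSolution apar aperp ell G A ε p q)
    (hφ₀ : IsLimitSolution aperp ell G φ₀) {ψ : V} (hψ : ψ ∈ G) :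
    aperp (p + q - φ₀) ψ = 0 := by
  simp [hAP.eq_left ψ hψ, hφ₀.eq ψ hψ]

end Formulations

section Identities

variable {K V : Type*} [Field K] [AddCommGroup V] [Module K V] {apar aperp : BilinForm K V}
  {ell : V →ₗ[K] K} {G A : Submodule K V} {ε : K} {p q φ₀ : V}

theorem IsAPSolution.aperp_error_right (hAP : IsAPSolution apar aperp ell G A ε p q)
    (hε : ε ≠ 0) (φ : V) :
    aperp (p + q - φ) q = ell q - apar q q / ε - aperp φ q := by
  have hq := hAP.eq_right q hAP.mem_right
  simp only [map_add, map_sub, LinearMap.add_apply, LinearMap.sub_apply]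
  field_simp
  linear_combination hq

theorem IsAPSolution.aperp_error_self (hAP : IsAPSolution apar aperp ell G A ε p q)
    (hφ₀ : IsLimitSolution aperp ell G φ₀) (hε : ε ≠ 0) :
    aperp (p + q - φ₀) (p + q - φ₀) = ell q - apar q q / ε - aperp φ₀ q := by
  have horth := hAP.aperp_error_eq_zero hφ₀ (G.sub_mem hAP.mem_left hφ₀.mem)
  calc aperp (p + q - φ₀) (p + q - φ₀)
      = aperp (p + q - φ₀) (p - φ₀) + aperp (p + q - φ₀) q := by
        rw [← map_add, ← add_sub_right_comm]
    _ = ell q - apar q q / ε - aperp φ₀ q := by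
        rw [horth, zero_add, hAP.aperp_error_right hε]

theorem IsAPSolution.energy_identity [NeZero (2 : K)]
    (hAP : IsAPSolution apar aperp ell G A ε p q) (hφ₀ : IsLimitSolution aperp ell G φ₀)
    (hapar : apar.IsSymm) (hG : G ≤ ker apar) (hε : ε ≠ 0) :
    1 / (2 * ε) * apar (p + q - φ₀) (p + q - φ₀) + aperp (p + q - φ₀) (p + q - φ₀) =
      ell q - apar q q / (2 * ε) - aperp φ₀ q := by
  rw [hAP.apar_error_self hapar hG hφ₀.mem, hAP.aperp_error_self hφ₀ hε]
  field_simp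
  ring

end Identities

theorem le_add_div_of_sq_le_mul {K : Type*} [Field K] [LinearOrder K] [IsStrictOrderedRing K]
    {ε x y k : K} (hε : 0 < ε) (hk : 0 ≤ k) (hy : 0 ≤ y) (h : x ^ 2 ≤ k * y) :
    x ≤ ε * k / 2 + y / (2 * ε) := by
  have hyoung : 2 * x ≤ ε * k + y / ε :=
    two_mul_le_add_of_sq_le_mul (by positivity) (by positivity) (h.trans_eq (by field_simp))
  calc x ≤ (ε * k + y / ε) / 2 := by linarith
    _ = ε * k / 2 + y / (2 * ε) := by field_simp

theorem sq_le_sq_mul_of_abs_le_mul_sqrt {x y k : ℝ} (hy : 0 ≤ y) (h : |x| ≤ k * √y) :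
    x ^ 2 ≤ k ^ 2 * y :=
  calc x ^ 2 = |x| ^ 2 := (sq_abs x).symm
    _ ≤ (k * √y) ^ 2 := by gcongr
    _ = k ^ 2 * y := by rw [mul_pow, Real.sq_sqrt hy]

end AsymptoticPreserving

open AsymptoticPreserving

theorem key_convergence_inequality_general {K V : Type*} [Field K] [LinearOrder K]
    [IsStrictOrderedRing K] [AddCommGroup V] [Module K V]
    {apar aperp c : LinearMap.BilinForm K V} {ell : V →ₗ[K] K} {G A : Submodule K V}
    {CW F₀ ε : K} {p q φ₀ : V} (hapar : apar.IsPosSemidef) (hG : G ≤ LinearMap.ker apar)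
    (hPW : ∀ x ∈ A, c x x ≤ CW ^ 2 * apar x x) (hell : ∀ x, ell x ^ 2 ≤ F₀ ^ 2 * c x x)
    (hε : 0 < ε) (hAP : IsAPSolution apar aperp ell G A ε p q)
    (hφ₀ : IsLimitSolution aperp ell G φ₀) :
    1 / (2 * ε) * apar (p + q - φ₀) (p + q - φ₀) + aperp (p + q - φ₀) (p + q - φ₀) ≤
      ε * (CW ^ 2 * F₀ ^ 2) / 2 - aperp φ₀ q := by
  have hload : ell q ^ 2 ≤ CW ^ 2 * F₀ ^ 2 * apar q q :=
    calc ell q ^ 2 ≤ F₀ ^ 2 * c q q := hell q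
      _ ≤ F₀ ^ 2 * (CW ^ 2 * apar q q) := by gcongr; exact hPW q hAP.mem_right
      _ = CW ^ 2 * F₀ ^ 2 * apar q q := by ring
  have hyoung := le_add_div_of_sq_le_mul hε (by positivity) (hapar.nonneg q) hload
  rw [hAP.energy_identity hφ₀ hapar.isSymm hG hε.ne']
  linarith

namespace IsCSPForm

variable {V : Type*} [NormedAddCommGroup V] [InnerProductSpace ℝ V]
  {a c : LinearMap.BilinForm ℝ V}

theorem isPosSemidef (ha : IsCSPForm a) : a.IsPosSemidef where
  eq := ha.1
  nonneg := ha.2.1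

theorem mem_ker_iff (ha : IsCSPForm a) {x : V} : x ∈ LinearMap.ker a ↔ a x x = 0 :=
  (a.apply_apply_same_eq_zero_iff ha.2.1 ⟨ha.1⟩).symm

theorem mem_orthogonal_ker_iff (hc : IsCSPForm c) (ha : IsCSPForm a) {x : V} :
    x ∈ c.orthogonal (LinearMap.ker a) ↔ ∀ ψ, a ψ ψ = 0 → c x ψ = 0 := by
  simp only [LinearMap.BilinForm.mem_orthogonal_iff, ha.mem_ker_iff, hc.1 x]

end IsCSPForm

/-- key convergence inequality:
(1/(2ε)) a∥(φ^ε−φ⁰,φ^ε−φ⁰) + a⊥(φ^ε−φ⁰,φ^ε−φ⁰) ≤ ε C_W² F₀²/2 − a⊥(φ⁰,q^ε),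
where φ^ε = p^ε + q^ε. -/
theorem key_convergence_inequality
    {V : Type*} [NormedAddCommGroup V] [InnerProductSpace ℝ V] [CompleteSpace V]
    (apar aperp c : V →ₗ[ℝ] V →ₗ[ℝ] ℝ)
    (hapar : IsCSPForm apar) (haperp : IsCSPForm aperp) (hc : IsCSPForm c)
    (α : ℝ) (hα : 0 < α)
    (hcoer : ∀ φ : V, α * ‖φ‖ ^ 2 ≤ apar φ φ + aperp φ φ)
    -- Hypothesis B: bounded projection P onto G along A, V = G ⊕ A
    (P : V →L[ℝ] V)
    (hPG : ∀ φ : V, apar (P φ) (P φ) = 0)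
    (hPA : ∀ φ : V, ∀ ψ : V, apar ψ ψ = 0 → c (φ - P φ) ψ = 0)
    (hPid : ∀ φ : V, apar φ φ = 0 → P φ = φ)
    (hPzero : ∀ φ : V, (∀ ψ : V, apar ψ ψ = 0 → c φ ψ = 0) → P φ = 0)
    -- Poincaré–Wirtinger inequality on A
    (CW : ℝ) (hCW : 0 < CW)
    (hPW : ∀ q : V, (∀ ψ : V, apar ψ ψ = 0 → c q ψ = 0) →
      c q q ≤ CW ^ 2 * apar q q)
    (ell : V →L[ℝ] ℝ) (F₀ : ℝ) (hF₀ : 0 ≤ F₀)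
    (hell : ∀ ψ : V, |ell ψ| ≤ F₀ * Real.sqrt (c ψ ψ))
    (ε : ℝ) (hε : ε ∈ Set.Ioo (0 : ℝ) 1)
    -- (p,q) ∈ G × A is the solution of the AP formulation
    (p q : V) (hpG : apar p p = 0)
    (hqA : ∀ ψ : V, apar ψ ψ = 0 → c q ψ = 0)
    (hAP1 : ∀ η : V, apar η η = 0 → aperp p η + aperp q η = ell η)
    (hAP2 : ∀ ξ : V, (∀ ψ : V, apar ψ ψ = 0 → c ξ ψ = 0) →
      apar q ξ + ε * aperp q ξ + ε * aperp p ξ = ε * ell ξ)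
    -- φ⁰ ∈ G is the unique solution of the Limit problem (L)
    (φ₀ : V) (hφ₀G : apar φ₀ φ₀ = 0)
    (hφ₀ : ∀ ψ : V, apar ψ ψ = 0 → aperp φ₀ ψ = ell ψ)
    (hφ₀uniq : ∀ φ' : V, apar φ' φ' = 0 →
      (∀ ψ : V, apar ψ ψ = 0 → aperp φ' ψ = ell ψ) → φ' = φ₀) :
    (1 / (2 * ε)) * apar (p + q - φ₀) (p + q - φ₀)
        + aperp (p + q - φ₀) (p + q - φ₀)
      ≤ ε * (CW ^ 2 * F₀ ^ 2) / 2 - aperp φ₀ q := by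
  have hG {x : V} := hapar.mem_ker_iff (x := x)
  have hA {x : V} := hc.mem_orthogonal_ker_iff hapar (x := x)
  have hAP : IsAPSolution apar aperp ell (LinearMap.ker apar)
      (LinearMap.BilinForm.orthogonal c (LinearMap.ker apar)) ε p q :=
    ⟨hG.2 hpG, hA.2 hqA, fun η hη => hAP1 η (hG.1 hη), fun ξ hξ => hAP2 ξ (hA.1 hξ)⟩
  have hlim : IsLimitSolution aperp ell (LinearMap.ker apar) φ₀ :=
    ⟨hG.2 hφ₀G, fun ψ hψ => hφ₀ ψ (hG.1 hψ)⟩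
  exact key_convergence_inequality_general hapar.isPosSemidef le_rfl
    (fun x hx => hPW x (hA.1 hx))
    (fun x => sq_le_sq_mul_of_abs_le_mul_sqrt (hc.2.1 x) (hell x)) hε.1 hAP hlim
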